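/- There exists a universal constant α ∈ (0, 1/2) with the following property. Let K > 0 and let s satisfy (1 − α)/2 < s ≤ 1/2. Then there exist T* > 0, C > 0 and c > 0, depending only on K and s, such that for every ε₁ ∈ (0, 1] and every classical solution θ of the regularized fractional Burgers equation with viscosity ε₁ on ℝ × (0, ∞) satisfying ‖θ(·,t)‖_{L²(ℝ)} ≤ K for all t > 0 and θ(x,t) → 0 as x → ±∞ for each t > 0, one has |θ(x,t) − θ(y,t)| ≤ C|x − y|^α for all t > T* and all x, y ∈ ℝ with |x − y| > c ε₁^{2−2s}. -/

import Mathlib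

open MeasureTheory Real Set Filter

/-- The normalizing constant of the 1-D fractional Laplacian. -/
noncomputable def fracC (s : ℝ) : ℝ :=
  (4 : ℝ) ^ s * Real.Gamma (1 / 2 + s) / (Real.sqrt Real.pi * |Real.Gamma (-s)|)

/-- The fractional Laplacian `(-Δ)^s u (x)`. -/
noncomputable def fracLap (s : ℝ) (u : ℝ → ℝ) (x : ℝ) : ℝ :=
  fracC s * ∫ y : ℝ, (u x - u y) / |x - y| ^ (1 + 2 * s)

/-- A classical solution of the regularized fractional Burgers equation
`θ_t + θ θ_x + (-Δ)^s θ - ε₁ θ_xx = 0` on a set `D ⊆ ℝ × ℝ` (points written `(x, t)`):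
a bounded continuous function, continuously differentiable in `t` and twice continuously
differentiable in `x`, satisfying the equation at every point of `D`, where the fractional
Laplacian (acting in `x`) is given by an absolutely convergent integral. -/
structure IsClassicalSolution (s ε₁ : ℝ) (θ : ℝ → ℝ → ℝ) (D : Set (ℝ × ℝ)) : Prop where
  bounded : ∃ B : ℝ, ∀ p ∈ D, |θ p.1 p.2| ≤ B
  cont : ContinuousOn (fun p : ℝ × ℝ => θ p.1 p.2) D
  diff_t : ∀ p ∈ D, DifferentiableAt ℝ (fun t => θ p.1 t) p.2
  cont_dt : ContinuousOn (fun p : ℝ × ℝ => deriv (fun t => θ p.1 t) p.2) D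
  diff_x : ∀ p ∈ D, DifferentiableAt ℝ (fun x => θ x p.2) p.1
  diff_xx : ∀ p ∈ D, DifferentiableAt ℝ (deriv fun x => θ x p.2) p.1
  cont_dx : ContinuousOn (fun p : ℝ × ℝ => deriv (fun x => θ x p.2) p.1) D
  cont_dxx : ContinuousOn (fun p : ℝ × ℝ => deriv (deriv fun x => θ x p.2) p.1) D
  integrable : ∀ p ∈ D,
    Integrable fun y : ℝ => (θ p.1 p.2 - θ y p.2) / |p.1 - y| ^ (1 + 2 * s)
  eqn : ∀ p ∈ D,
    deriv (fun t => θ p.1 t) p.2 + θ p.1 p.2 * deriv (fun x => θ x p.2) p.1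
      + fracLap s (fun x => θ x p.2) p.1
      - ε₁ * deriv (deriv fun x => θ x p.2) p.1 = 0

/-! ### A coercive weight with bounded fractional Laplacian -/

/-- A smooth coercive weight of growth `|x| ^ s`, used to localize maxima. -/
noncomputable def coerciveWeight (s x : ℝ) : ℝ := (1 + x ^ 2) ^ (s / 2)

/-- A bound for the increments of `coerciveWeight s`. -/
noncomputable def incrementBound (s z : ℝ) : ℝ := min |z| (|z| ^ s)

/-- The integral of `incrementBound s` against the kernel of the fractional Laplacian. -/
noncomputable def incrementMass (s : ℝ) : ℝ := ∫ z : ℝ, incrementBound s z / |z| ^ (1 + 2 * s)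

lemma one_le_coerciveWeight {s : ℝ} (hs : 0 ≤ s) (x : ℝ) : 1 ≤ coerciveWeight s x :=
  Real.one_le_rpow (by nlinarith [sq_nonneg x]) (by positivity)

lemma abs_rpow_le_coerciveWeight {s : ℝ} (hs : 0 ≤ s) (x : ℝ) : |x| ^ s ≤ coerciveWeight s x := by
  have h : |x| ^ s = (x ^ 2) ^ (s / 2) := by
    rw [← sq_abs, ← Real.rpow_natCast, ← Real.rpow_mul (abs_nonneg x)]
    congr 1; push_cast; ring
  rw [h]
  exact Real.rpow_le_rpow (sq_nonneg x) (by linarith) (by positivity)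

lemma incrementBound_nonneg (s z : ℝ) : 0 ≤ incrementBound s z :=
  le_min (abs_nonneg z) (by positivity)

lemma incrementBound_le_rpow {s z : ℝ} (hs0 : 0 < s) (hs : s ≤ 1 / 2) :
    incrementBound s z ≤ |z| ^ (2 * s) := by
  rcases le_total |z| 1 with h | h
  · refine (min_le_left _ _).trans ?_
    rcases (abs_nonneg z).eq_or_lt with h0 | h0
    · rw [← h0]; positivity
    · calc |z| = |z| ^ (1 : ℝ) := (Real.rpow_one _).symm
        _ ≤ |z| ^ (2 * s) := Real.rpow_le_rpow_of_exponent_ge h0 h (by linarith)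
  · exact (min_le_right _ _).trans (Real.rpow_le_rpow_of_exponent_le h (by linarith))

lemma coerciveWeight_add_sub_le {s : ℝ} (hs0 : 0 < s) (hs : s ≤ 1 / 2) (x z : ℝ) :
    coerciveWeight s (x + z) - coerciveWeight s x ≤ incrementBound s z := by
  have key : ∀ y, coerciveWeight s y = √(1 + y ^ 2) ^ s := fun y => by
    rw [coerciveWeight, Real.sqrt_eq_rpow, ← Real.rpow_mul (by positivity)]
    congr 1; ring
  rw [key, key]
  set b := √(1 + x ^ 2) with hb
  have hb2 : b ^ 2 = 1 + x ^ 2 := Real.sq_sqrt (by positivity)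
  have hb1 : 1 ≤ b := by
    rw [hb]; exact Real.one_le_sqrt.2 (by nlinarith [sq_nonneg x])
  have hxb : |x| ≤ b := Real.abs_le_sqrt (by linarith)
  have hab : √(1 + (x + z) ^ 2) ≤ b + |z| := by
    apply Real.sqrt_le_iff.2 ⟨by positivity, ?_⟩
    have : x * z ≤ b * |z| := (le_abs_self _).trans (by
      rw [abs_mul]; exact mul_le_mul_of_nonneg_right hxb (abs_nonneg z))
    nlinarith [sq_abs z]
  have hmono : √(1 + (x + z) ^ 2) ^ s ≤ (b + |z|) ^ s :=
    Real.rpow_le_rpow (Real.sqrt_nonneg _) hab hs0.le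
  refine le_min ?_ ?_
  · have h1 : (b + |z|) ^ s ≤ b ^ s + |z| := by
      have hb0 : 0 < b := by linarith
      have e : b + |z| = b * (1 + |z| / b) := by field_simp
      rw [e, Real.mul_rpow hb0.le (by positivity)]
      have h2 : (1 + |z| / b) ^ s ≤ 1 + s * (|z| / b) :=
        rpow_one_add_le_one_add_mul_self (by have : 0 ≤ |z| / b := by positivity
                                             linarith) hs0.le (by linarith)
      have h3 : b ^ s ≤ b := by
        calc b ^ s ≤ b ^ (1 : ℝ) := Real.rpow_le_rpow_of_exponent_le hb1 (by linarith)
          _ = b := Real.rpow_one b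
      have h4 : b ^ s * (s * (|z| / b)) ≤ |z| := by
        calc b ^ s * (s * (|z| / b)) ≤ b * (1 * (|z| / b)) := by
              gcongr; linarith
          _ = |z| := by field_simp
      calc b ^ s * (1 + |z| / b) ^ s ≤ b ^ s * (1 + s * (|z| / b)) := by gcongr
        _ = b ^ s + b ^ s * (s * (|z| / b)) := by ring
        _ ≤ _ := by linarith
    linarith
  · have := Real.rpow_add_le_add_rpow (p := s) (a := b) (b := |z|) (by linarith) (abs_nonneg z)
      hs0.le (by linarith)
    linarith

lemma hasDerivAt_coerciveWeight (s x : ℝ) :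
    HasDerivAt (coerciveWeight s) (s * x * (1 + x ^ 2) ^ (s / 2 - 1)) x := by
  have h : HasDerivAt (fun y : ℝ => 1 + y ^ 2) (2 * x) x := by
    simpa using (hasDerivAt_pow 2 x).const_add 1
  have h2 := h.rpow_const (p := s / 2) (Or.inl (by positivity))
  exact h2.congr_deriv (by ring)

lemma deriv_coerciveWeight (s : ℝ) :
    deriv (coerciveWeight s) = fun x => s * x * (1 + x ^ 2) ^ (s / 2 - 1) :=
  funext fun x => (hasDerivAt_coerciveWeight s x).deriv

lemma differentiable_coerciveWeight (s : ℝ) : Differentiable ℝ (coerciveWeight s) :=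
  fun x => (hasDerivAt_coerciveWeight s x).differentiableAt

lemma hasDerivAt_deriv_coerciveWeight (s x : ℝ) :
    HasDerivAt (deriv (coerciveWeight s)) (s * (1 + x ^ 2) ^ (s / 2 - 1)
      + s * x * (2 * x * (s / 2 - 1) * (1 + x ^ 2) ^ (s / 2 - 1 - 1))) x := by
  have h : HasDerivAt (fun y : ℝ => 1 + y ^ 2) (2 * x) x := by
    simpa using (hasDerivAt_pow 2 x).const_add 1
  have h2 := h.rpow_const (p := s / 2 - 1) (Or.inl (by positivity))
  have h3 : HasDerivAt (fun y : ℝ => s * y) s x := by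
    simpa using (hasDerivAt_id x).const_mul s
  rw [deriv_coerciveWeight]
  exact h3.mul h2

lemma deriv_deriv_coerciveWeight_le {s : ℝ} (hs0 : 0 < s) (hs : s ≤ 1 / 2) (x : ℝ) :
    deriv (deriv (coerciveWeight s)) x ≤ 1 := by
  rw [(hasDerivAt_deriv_coerciveWeight s x).deriv]
  have h1 : (1 + x ^ 2) ^ (s / 2 - 1) ≤ 1 :=
    Real.rpow_le_one_of_one_le_of_nonpos (by nlinarith [sq_nonneg x]) (by linarith)
  have h2 : 0 ≤ s * (x ^ 2) * (2 * (1 - s / 2) * (1 + x ^ 2) ^ (s / 2 - 1 - 1)) := by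
    have : 0 ≤ 1 - s / 2 := by linarith
    positivity
  have h3 : 0 ≤ (1 + x ^ 2) ^ (s / 2 - 1) := by positivity
  nlinarith

lemma abs_deriv_coerciveWeight_le {s : ℝ} (hs0 : 0 < s) (hs : s ≤ 1 / 2) (x : ℝ) :
    |deriv (coerciveWeight s) x| ≤ 1 := by
  have hL : LipschitzWith 1 (coerciveWeight s) := by
    refine LipschitzWith.of_le_add fun a b => ?_
    have h := coerciveWeight_add_sub_le hs0 hs b (a - b)
    rw [add_sub_cancel] at h
    have h2 : incrementBound s (a - b) ≤ |a - b| := min_le_left _ _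
    rw [Real.dist_eq]; linarith
  simpa using norm_deriv_le_of_lipschitz (x₀ := x) hL

/-! ### Lower bounds for the fractional Laplacian -/

lemma integrable_incrementBound_div {s : ℝ} (hs0 : 0 < s) (hs : s < 1 / 2) :
    Integrable fun z : ℝ => incrementBound s z / |z| ^ (1 + 2 * s) := by
  have h := integrable_fun_norm_addHaar (E := ℝ) volume
    (f := fun y : ℝ => min y (y ^ s) / y ^ (1 + 2 * s))
  simp only [Real.norm_eq_abs, Module.finrank_self, tsub_self, pow_zero, one_smul] at h
  refine h.2 ?_
  rw [← Ioc_union_Ioi_eq_Ioi (zero_le_one' ℝ)]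
  refine IntegrableOn.union ?_ ?_
  · have h1 : IntegrableOn (fun y : ℝ => y ^ (-(2 * s))) (Ioc 0 1) := by
      have := intervalIntegral.intervalIntegrable_rpow' (a := 0) (b := 1) (r := -(2 * s))
        (by linarith)
      rwa [intervalIntegrable_iff_integrableOn_Ioc_of_le zero_le_one] at this
    refine h1.congr_fun (fun y hy => ?_) measurableSet_Ioc
    have hy0 : 0 < y := hy.1
    have : y ≤ y ^ s := by
      calc y = y ^ (1 : ℝ) := (Real.rpow_one _).symm
        _ ≤ _ := Real.rpow_le_rpow_of_exponent_ge hy0 hy.2 (by linarith)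
    simp only [min_eq_left this]
    rw [Real.rpow_add hy0, Real.rpow_neg hy0.le, Real.rpow_one]
    field_simp
  · refine (integrableOn_Ioi_rpow_of_lt (a := -1 - s) (by linarith) one_pos).congr_fun
      (fun y hy => ?_) measurableSet_Ioi
    have hy1 : 1 < y := hy
    have hy0 : 0 < y := by linarith
    have : y ^ s ≤ y := by
      calc y ^ s ≤ y ^ (1 : ℝ) := Real.rpow_le_rpow_of_exponent_le hy1.le (by linarith)
        _ = y := Real.rpow_one _
    simp only [min_eq_right this]
    rw [← Real.rpow_sub hy0]
    congr 1; ring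

lemma incrementMass_nonneg (s : ℝ) : 0 ≤ incrementMass s :=
  integral_nonneg fun z => div_nonneg (incrementBound_nonneg s z) (by positivity)

lemma fracC_pos {s : ℝ} (hs0 : 0 < s) (hs : s < 1) : 0 < fracC s := by
  have h1 : 0 < Real.Gamma (1 / 2 + s) := Real.Gamma_pos_of_pos (by linarith)
  have h2 : Real.Gamma (-s) ≠ 0 := by
    refine Real.Gamma_ne_zero fun m hm => ?_
    have hm' : s = m := by linarith
    rw [hm'] at hs0 hs
    have a : 0 < m := by exact_mod_cast hs0
    have b : m < 1 := by exact_mod_cast hs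
    omega
  have : 0 < |Real.Gamma (-s)| := abs_pos.2 h2
  unfold fracC
  have := Real.pi_pos
  positivity

/-- If `f` is bounded below by a multiple of `incrementBound`, then its integral against the
fractional kernel controls its mean over any centred interval. -/
lemma le_integral_div_rpow {s p R : ℝ} (hs0 : 0 < s) (hs : s < 1 / 2) (hp : 0 ≤ p) (hR : 0 < R)
    {f : ℝ → ℝ} (hf : Continuous f) (hf0 : f 0 = 0)
    (hint : Integrable fun z : ℝ => f z / |z| ^ (1 + 2 * s))
    (hlow : ∀ z, -(p * incrementBound s z) ≤ f z) :
    (R ^ (1 + 2 * s))⁻¹ * (∫ z in (-R)..R, f z) - p * incrementMass s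
      ≤ ∫ z, f z / |z| ^ (1 + 2 * s) := by
  have hb := integrable_incrementBound_div hs0 hs
  have hsum : Integrable fun z : ℝ => (f z + p * incrementBound s z) / |z| ^ (1 + 2 * s) := by
    refine (hint.add (hb.const_mul p)).congr (Eventually.of_forall fun z => ?_)
    simp only [Pi.add_apply]; ring
  have hsumint : ∫ z : ℝ, (f z + p * incrementBound s z) / |z| ^ (1 + 2 * s)
      = (∫ z, f z / |z| ^ (1 + 2 * s)) + p * incrementMass s := by
    rw [incrementMass, ← integral_const_mul, ← integral_add hint (hb.const_mul p)]
    congr 1; ext z; ring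
  have hnn : ∀ z, 0 ≤ (f z + p * incrementBound s z) / |z| ^ (1 + 2 * s) := fun z =>
    div_nonneg (by linarith [hlow z]) (by positivity)
  have h1 : ∫ z in Ioc (-R) R, (f z + p * incrementBound s z) / |z| ^ (1 + 2 * s)
      ≤ ∫ z : ℝ, (f z + p * incrementBound s z) / |z| ^ (1 + 2 * s) :=
    setIntegral_le_integral hsum (Eventually.of_forall hnn)
  have h2 : ∫ z in Ioc (-R) R, (R ^ (1 + 2 * s))⁻¹ * f z
      ≤ ∫ z in Ioc (-R) R, (f z + p * incrementBound s z) / |z| ^ (1 + 2 * s) := by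
    refine setIntegral_mono_on ?_ hsum.integrableOn measurableSet_Ioc fun z hz => ?_
    · exact ((continuous_const.mul hf).integrableOn_Icc).mono_set Ioc_subset_Icc_self
    · rcases eq_or_ne z 0 with rfl | hz0
      · rw [hf0, mul_zero]; simpa [hf0] using hnn 0
      · have hzR : |z| ≤ R := abs_le.2 ⟨hz.1.le, hz.2⟩
        have hz' : 0 < |z| := abs_pos.2 hz0
        have hpb := mul_nonneg hp (incrementBound_nonneg s z)
        calc (R ^ (1 + 2 * s))⁻¹ * f z
            ≤ (R ^ (1 + 2 * s))⁻¹ * (f z + p * incrementBound s z) := by gcongr; linarith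
          _ ≤ (|z| ^ (1 + 2 * s))⁻¹ * (f z + p * incrementBound s z) := by
              have := hlow z
              gcongr
              linarith
          _ = _ := by rw [div_eq_inv_mul]
  rw [intervalIntegral.integral_of_le (by linarith), ← integral_const_mul]
  linarith

lemma fracLap_eq_integral_add (s : ℝ) (u : ℝ → ℝ) (x : ℝ) :
    fracLap s u x = fracC s * ∫ z : ℝ, (u x - u (x + z)) / |z| ^ (1 + 2 * s) := by
  rw [fracLap, ← integral_add_left_eq_self _ x]
  simp

lemma integrable_add_of_integrable {s x : ℝ} {u : ℝ → ℝ}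
    (h : Integrable fun y : ℝ => (u x - u y) / |x - y| ^ (1 + 2 * s)) :
    Integrable fun z : ℝ => (u x - u (x + z)) / |z| ^ (1 + 2 * s) := by
  simpa using h.comp_add_left x

/-- Lower bound for the fractional Laplacian at a penalized maximum of a function in `L²`. -/
lemma fracLap_lower_bound_at_max {s P K x : ℝ} (hs0 : 0 < s) (hs : s < 1 / 2) (hP : 0 ≤ P)
    (hK : 0 < K) {u : ℝ → ℝ} (hu : Continuous u)
    (hint : Integrable fun y : ℝ => (u x - u y) / |x - y| ^ (1 + 2 * s))
    (hL2 : Integrable fun y => u y ^ 2) (hL2K : ∫ y, u y ^ 2 ≤ K ^ 2) (hx : 0 < u x)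
    (hmax : ∀ y, u y - P * coerciveWeight s y ≤ u x - P * coerciveWeight s x) :
    fracC s * (u x ^ (1 + 4 * s) * K ^ (-(4 * s)) / 2 - P * incrementMass s)
      ≤ fracLap s u x := by
  rw [fracLap_eq_integral_add]
  refine mul_le_mul_of_nonneg_left ?_ (fracC_pos hs0 (by linarith)).le
  set m := u x with hm
  set R := K ^ 2 / m ^ 2 with hR
  have hR0 : 0 < R := by positivity
  have key := le_integral_div_rpow hs0 hs hP hR0 (f := fun z => m - u (x + z)) (by fun_prop)
    (by simp [hm]) (integrable_add_of_integrable hint) (fun z => by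
      have h1 := hmax (x + z)
      have h2 := mul_le_mul_of_nonneg_left (coerciveWeight_add_sub_le hs0 hs.le x z) hP
      linarith)
  refine le_trans ?_ key
  gcongr
  have hL2x : Integrable fun z => u (x + z) ^ 2 := hL2.comp_add_left x
  have hsq : ∫ z in (-R)..R, u (x + z) ^ 2 ≤ K ^ 2 := by
    rw [intervalIntegral.integral_of_le (by linarith)]
    refine (setIntegral_le_integral hL2x (Eventually.of_forall fun z => sq_nonneg _)).trans ?_
    rwa [integral_add_left_eq_self (fun z => u z ^ 2) x]
  have hlow : R * m / 2 ≤ ∫ z in (-R)..R, (m - u (x + z)) := by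
    have h1 : ∫ z in (-R)..R, (m / 2 - (2 * m)⁻¹ * u (x + z) ^ 2)
        ≤ ∫ z in (-R)..R, (m - u (x + z)) := by
      refine intervalIntegral.integral_mono_on (by linarith) ?_ ?_ fun z _ => ?_
      · exact Continuous.intervalIntegrable (by fun_prop) _ _
      · exact Continuous.intervalIntegrable (by fun_prop) _ _
      · have : m - u (x + z) - (m / 2 - (2 * m)⁻¹ * u (x + z) ^ 2)
            = (2 * m)⁻¹ * (m - u (x + z)) ^ 2 := by field_simp; ring
        have h0 : 0 ≤ (2 * m)⁻¹ * (m - u (x + z)) ^ 2 := by positivity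
        linarith
    rw [intervalIntegral.integral_sub (by simp)
      (Continuous.intervalIntegrable (by fun_prop) _ _), intervalIntegral.integral_const,
      intervalIntegral.integral_const_mul, smul_eq_mul] at h1
    have h2 : (2 * m)⁻¹ * ∫ z in (-R)..R, u (x + z) ^ 2 ≤ (2 * m)⁻¹ * K ^ 2 := by gcongr
    have h3 : (2 * m)⁻¹ * K ^ 2 = R * m / 2 := by rw [hR]; field_simp
    linarith
  have hpow : m ^ (1 + 4 * s) * K ^ (-(4 * s)) / 2 = (R ^ (1 + 2 * s))⁻¹ * (R * m / 2) := by
    have e1 : R ^ (2 * s) = K ^ (4 * s) / m ^ (4 * s) := by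
      rw [hR, Real.div_rpow (by positivity) (by positivity), ← Real.rpow_natCast,
        ← Real.rpow_natCast, ← Real.rpow_mul hK.le, ← Real.rpow_mul hx.le]
      congr 2 <;> (push_cast; ring)
    rw [Real.rpow_add hR0, e1, Real.rpow_one, Real.rpow_add hx, Real.rpow_one,
      Real.rpow_neg hK.le]
    have := Real.rpow_pos_of_pos hK (4 * s)
    have := Real.rpow_pos_of_pos hx (4 * s)
    field_simp
  rw [hpow]
  gcongr

lemma integral_shift_sub_eq {u : ℝ → ℝ} (hu : Continuous u) (p a : ℝ) :
    ∫ z in (-a)..a, (u (p + a + z) - u (p + z)) = ∫ z in (0 : ℝ)..a, (u (p + a + z) - u (p - z)) := by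
  have hi : ∀ b c, IntervalIntegrable u volume b c := fun b c => hu.intervalIntegrable b c
  rw [intervalIntegral.integral_sub (Continuous.intervalIntegrable (by fun_prop) _ _)
      (Continuous.intervalIntegrable (by fun_prop) _ _),
    intervalIntegral.integral_sub (Continuous.intervalIntegrable (by fun_prop) _ _)
      (Continuous.intervalIntegrable (by fun_prop) _ _),
    intervalIntegral.integral_comp_add_left, intervalIntegral.integral_comp_add_left,
    intervalIntegral.integral_comp_add_left, intervalIntegral.integral_comp_sub_left]
  have h1 := intervalIntegral.integral_add_adjacent_intervals (hi p (p + a)) (hi (p + a) (p + a + a))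
  have h2 := intervalIntegral.integral_add_adjacent_intervals (hi (p - a) p) (hi p (p + a))
  have e1 : p + a + -a = p := by ring
  have e2 : p + -a = p - a := by ring
  rw [e1, e2, add_zero, sub_zero]
  linarith

/-- Lower bound for the difference of the fractional Laplacians at two points where a penalized
modulus of continuity is attained. -/
lemma fracLap_sub_lower_bound {s P x y : ℝ} (hs0 : 0 < s) (hs : s < 1 / 2) (hP : 0 ≤ P)
    (hxy : x ≠ y) {u ω : ℝ → ℝ} (hu : Continuous u)
    (hx : Integrable fun z : ℝ => (u x - u z) / |x - z| ^ (1 + 2 * s))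
    (hy : Integrable fun z : ℝ => (u y - u z) / |y - z| ^ (1 + 2 * s))
    (hω : MonotoneOn ω (Ici 0)) (hω3 : ω (3 * |x - y|) ≤ 3 / 2 * ω |x - y|)
    (hmax : ∀ a b, u a - u b ≤ ω |a - b| + P * (coerciveWeight s a + coerciveWeight s b))
    (heq : u x - u y = ω |x - y| + P * (coerciveWeight s x + coerciveWeight s y)) :
    fracC s * (ω |x - y| * |x - y| ^ (-(2 * s)) / 2 - 2 * P * (1 + incrementMass s))
      ≤ fracLap s u x - fracLap s u y := by
  have hx' := integrable_add_of_integrable hx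
  have hy' := integrable_add_of_integrable hy
  rw [fracLap_eq_integral_add, fracLap_eq_integral_add, ← mul_sub, ← integral_sub hx' hy']
  refine mul_le_mul_of_nonneg_left ?_ (fracC_pos hs0 (by linarith)).le
  set ξ := |x - y| with hξ
  have hξ0 : 0 < ξ := abs_pos.2 (sub_ne_zero.2 hxy)
  set E := P * (coerciveWeight s x + coerciveWeight s y) with hE
  have hE0 : 0 ≤ E := by
    have := one_le_coerciveWeight hs0.le x
    have := one_le_coerciveWeight hs0.le y
    positivity
  have key := le_integral_div_rpow (p := 2 * P) hs0 hs (by positivity) hξ0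
    (f := fun z => (u x - u (x + z)) - (u y - u (y + z))) (by fun_prop) (by simp)
    ((hx'.sub hy').congr (Eventually.of_forall fun z => by simp only [Pi.sub_apply]; ring))
    (fun z => by
      have h1 := hmax (x + z) (y + z)
      rw [add_sub_add_right_eq_sub, ← hξ] at h1
      have h2 := mul_le_mul_of_nonneg_left (coerciveWeight_add_sub_le hs0 hs.le x z) hP
      have h3 := mul_le_mul_of_nonneg_left (coerciveWeight_add_sub_le hs0 hs.le y z) hP
      linarith)
  have hcongr : ∫ z, ((u x - u (x + z)) / |z| ^ (1 + 2 * s) - (u y - u (y + z)) / |z| ^ (1 + 2 * s))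
      = ∫ z, ((u x - u (x + z)) - (u y - u (y + z))) / |z| ^ (1 + 2 * s) := by
    congr 1; ext z; ring
  rw [hcongr]
  refine le_trans ?_ key
  -- the outward pairs, at distance between `ξ` and `3 * ξ`
  have hpair : ∀ z ∈ Icc 0 ξ, ∀ a b : ℝ, |a - b| = ξ + 2 * z →
      coerciveWeight s a + coerciveWeight s b ≤ coerciveWeight s x + coerciveWeight s y
        + 2 * incrementBound s z → u a - u b ≤ 3 / 2 * ω ξ + E + 2 * P * ξ ^ (2 * s) := by
    intro z hz a b hab hw
    have h1 := hmax a b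
    have h2 : ω |a - b| ≤ ω (3 * ξ) := by
      rw [hab]
      exact hω (by simp only [mem_Ici]; linarith [hz.1]) (by simp only [mem_Ici]; linarith)
        (by linarith [hz.2])
    have h3 := mul_le_mul_of_nonneg_left hw hP
    have h4 : incrementBound s z ≤ ξ ^ (2 * s) :=
      (incrementBound_le_rpow hs0 hs.le).trans
        (Real.rpow_le_rpow (abs_nonneg z) (by rw [abs_of_nonneg hz.1]; exact hz.2) (by linarith))
    have h5 := mul_le_mul_of_nonneg_left h4 hP
    linarith
  have hweight : ∀ z, 0 ≤ z → ∀ a b, coerciveWeight s (a + z) + coerciveWeight s (b - z)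
      ≤ coerciveWeight s a + coerciveWeight s b + 2 * incrementBound s z := by
    intro z hz a b
    have h1 := coerciveWeight_add_sub_le hs0 hs.le a z
    have h2 := coerciveWeight_add_sub_le hs0 hs.le b (-z)
    have h3 : incrementBound s (-z) = incrementBound s z := by simp [incrementBound]
    rw [← sub_eq_add_neg] at h2
    linarith
  have hbound : ∫ z in (-ξ)..ξ, (u (x + z) - u (y + z))
      ≤ ξ * (3 / 2 * ω ξ + E + 2 * P * ξ ^ (2 * s)) := by
    have hle : ∀ g : ℝ → ℝ, Continuous g →
        (∀ z ∈ Icc 0 ξ, g z ≤ 3 / 2 * ω ξ + E + 2 * P * ξ ^ (2 * s)) →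
        ∫ z in (0 : ℝ)..ξ, g z ≤ ξ * (3 / 2 * ω ξ + E + 2 * P * ξ ^ (2 * s)) := by
      intro g hg hgb
      have := intervalIntegral.integral_mono_on (μ := volume) hξ0.le (hg.intervalIntegrable 0 ξ)
        ((continuous_const (y := 3 / 2 * ω ξ + E + 2 * P * ξ ^ (2 * s))).intervalIntegrable 0 ξ) hgb
      rwa [intervalIntegral.integral_const, smul_eq_mul, sub_zero] at this
    rcases lt_or_gt_of_ne hxy with h | h
    · have hξ' : ξ = y - x := by rw [hξ, abs_of_neg (by linarith)]; ring
      have hyx : y = x + ξ := by linarith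
      have e := integral_shift_sub_eq hu x ξ
      rw [← hyx] at e
      have e2 : ∫ z in (-ξ)..ξ, (u (x + z) - u (y + z))
          = ∫ z in (0 : ℝ)..ξ, (u (x - z) - u (y + z)) := by
        have n1 : ∫ z in (-ξ)..ξ, (u (x + z) - u (y + z))
            = -∫ z in (-ξ)..ξ, (u (y + z) - u (x + z)) := by
          rw [← intervalIntegral.integral_neg]; congr 1; ext z; ring
        have n2 : ∫ z in (0 : ℝ)..ξ, (u (x - z) - u (y + z))
            = -∫ z in (0 : ℝ)..ξ, (u (y + z) - u (x - z)) := by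
          rw [← intervalIntegral.integral_neg]; congr 1; ext z; ring
        rw [n1, n2, e]
      rw [e2]
      refine hle _ (by fun_prop) fun z hz => hpair z hz _ _ ?_ ?_
      · rw [abs_of_nonpos (by linarith [hz.1])]; linarith
      · linarith [hweight z hz.1 y x]
    · have hξ' : ξ = x - y := by rw [hξ, abs_of_pos (by linarith)]
      have hyx : x = y + ξ := by linarith
      have e := integral_shift_sub_eq hu y ξ
      rw [← hyx] at e
      rw [e]
      refine hle _ (by fun_prop) fun z hz => hpair z hz _ _ ?_ (hweight z hz.1 x y)
      rw [abs_of_nonneg (by linarith [hz.1])]; linarith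
  have hint : ∫ z in (-ξ)..ξ, ((u x - u (x + z)) - (u y - u (y + z)))
      = 2 * ξ * (ω ξ + E) - ∫ z in (-ξ)..ξ, (u (x + z) - u (y + z)) := by
    have : ∀ z, (u x - u (x + z)) - (u y - u (y + z)) = (u x - u y) - (u (x + z) - u (y + z)) :=
      fun z => by ring
    simp only [this]
    rw [intervalIntegral.integral_sub (continuous_const.intervalIntegrable _ _)
      (Continuous.intervalIntegrable (by fun_prop) _ _), intervalIntegral.integral_const, heq,
      smul_eq_mul]
    ring
  have hlow : ξ * (ω ξ / 2 - 2 * P * ξ ^ (2 * s))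
      ≤ ∫ z in (-ξ)..ξ, ((u x - u (x + z)) - (u y - u (y + z))) := by
    rw [hint]
    have := mul_nonneg hξ0.le hE0
    linarith
  have hpow : ω ξ * ξ ^ (-(2 * s)) / 2 - 2 * P
      = (ξ ^ (1 + 2 * s))⁻¹ * (ξ * (ω ξ / 2 - 2 * P * ξ ^ (2 * s))) := by
    rw [Real.rpow_add hξ0, Real.rpow_neg hξ0.le, Real.rpow_one]
    have := Real.rpow_pos_of_pos hξ0 (2 * s)
    field_simp
  have hfin : (ξ ^ (1 + 2 * s))⁻¹ * (ξ * (ω ξ / 2 - 2 * P * ξ ^ (2 * s)))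
      ≤ (ξ ^ (1 + 2 * s))⁻¹ * ∫ z in (-ξ)..ξ, ((u x - u (x + z)) - (u y - u (y + z))) := by
    gcongr
  linarith

/-! ### First touching points -/

/-- A continuous family that starts negative and is nonnegative only over a compact set either
stays negative or has a first touching point. -/
lemma exists_first_touching {X : Type*} [TopologicalSpace X] [T2Space X] {G : X → ℝ → ℝ} {a b : ℝ}
    {S : Set X} (hS : IsCompact S)
    (hG : ContinuousOn (fun p : X × ℝ => G p.1 p.2) (univ ×ˢ Icc a b))
    (hGS : ∀ x, ∀ t ∈ Icc a b, 0 ≤ G x t → x ∈ S) (ha : ∀ x, G x a < 0)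
    {x₁ : X} {t₁ : ℝ} (ht₁ : t₁ ∈ Icc a b) (h₁ : 0 ≤ G x₁ t₁) :
    ∃ x, ∃ t ∈ Ioc a b, G x t = 0 ∧ (∀ y, G y t ≤ 0) ∧ ∀ r ∈ Ico a t, G x r < 0 := by
  have hcS : ContinuousOn (fun p : X × ℝ => G p.1 p.2) (S ×ˢ Icc a b) :=
    hG.mono (prod_mono (subset_univ _) subset_rfl)
  have hcpt : IsCompact (S ×ˢ Icc a b) := hS.prod isCompact_Icc
  have hZ : IsCompact ((S ×ˢ Icc a b) ∩ (fun p : X × ℝ => G p.1 p.2) ⁻¹' Ici 0) :=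
    hcpt.of_isClosed_subset (hcS.preimage_isClosed_of_isClosed hcpt.isClosed isClosed_Ici)
      inter_subset_left
  obtain ⟨⟨x, t⟩, ⟨⟨-, ht⟩, hGx⟩, hmin⟩ := hZ.exists_isMinOn ⟨(x₁, t₁), ⟨hGS _ _ ht₁ h₁, ht₁⟩, h₁⟩
    continuous_snd.continuousOn
  simp only [mem_preimage, mem_Ici] at hGx
  have hneg : ∀ y, ∀ r ∈ Ico a t, G y r < 0 := by
    intro y r hr
    by_contra! hcon
    have hr' : r ∈ Icc a b := ⟨hr.1, hr.2.le.trans ht.2⟩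
    have := hmin (show (y, r) ∈ _ from ⟨⟨hGS _ _ hr' hcon, hr'⟩, hcon⟩)
    exact absurd hr.2 (not_lt.2 this)
  have hat : a < t := by
    refine lt_of_le_of_ne ht.1 fun h => ?_
    exact absurd (h ▸ ha x) (not_lt.2 hGx)
  have hle : ∀ y, G y t ≤ 0 := by
    intro y
    have hGt : ContinuousOn (G y) (Icc a b) :=
      hG.comp (f := fun t : ℝ => (y, t)) (by fun_prop) fun t ht => ⟨mem_univ _, ht⟩
    have htend : Tendsto (G y) (nhdsWithin t (Ioo a t)) (nhds (G y t)) :=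
      (hGt t ht).mono_left (nhdsWithin_mono _ fun r hr => ⟨hr.1.le, hr.2.le.trans ht.2⟩)
    have : (nhdsWithin t (Ioo a t)).NeBot := right_nhdsWithin_Ioo_neBot hat
    exact le_of_tendsto htend (eventually_mem_nhdsWithin.mono fun r hr =>
      (hneg y r ⟨hr.1.le, hr.2⟩).le)
  exact ⟨x, t, ⟨hat, ht.2⟩, le_antisymm (hle x) hGx, hle, hneg x⟩

lemma HasDerivAt.nonneg_of_left_lt {f : ℝ → ℝ} {d a t : ℝ} (hf : HasDerivAt f d t) (hat : a < t)
    (hlt : ∀ r ∈ Ico a t, f r < f t) : 0 ≤ d := by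
  have h := (hasDerivAt_iff_tendsto_slope.1 hf).mono_left
    (nhdsWithin_mono t (show Ioo a t ⊆ {t}ᶜ from fun r hr => hr.2.ne))
  have : (nhdsWithin t (Ioo a t)).NeBot := right_nhdsWithin_Ioo_neBot hat
  refine ge_of_tendsto h (eventually_mem_nhdsWithin.mono fun r hr => ?_)
  rw [slope_def_field]
  have := hlt r ⟨hr.1.le, hr.2⟩
  exact div_nonneg_of_nonpos (by linarith) (by linarith [hr.2])

lemma IsLocalMax.deriv_deriv_nonpos {f : ℝ → ℝ} {x : ℝ} (h : IsLocalMax f x)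
    (hf : ContinuousAt f x) : deriv (deriv f) x ≤ 0 := by
  by_contra! hpos
  have hmin := isLocalMin_of_deriv_deriv_pos hpos h.deriv_eq_zero hf
  have hconst : f =ᶠ[nhds x] fun _ => f x := by
    filter_upwards [h, hmin] with y h1 h2 using le_antisymm h1 h2
  have := hconst.deriv.deriv_eq
  simp at this
  linarith

/-- Derivative bounds at a penalized maximum. -/
lemma deriv_bounds_at_max {s P x : ℝ} (hs0 : 0 < s) (hs : s ≤ 1 / 2) (hP : 0 ≤ P) {u : ℝ → ℝ}
    (hu : Differentiable ℝ u) (hu2 : Differentiable ℝ (deriv u))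
    (hmax : ∀ y, u y - P * coerciveWeight s y ≤ u x - P * coerciveWeight s x) :
    |deriv u x| ≤ P ∧ deriv (deriv u) x ≤ P := by
  have hψ := differentiable_coerciveWeight s
  have hloc : IsLocalMax (fun y => u y - P * coerciveWeight s y) x := Eventually.of_forall hmax
  have hd : deriv (fun y => u y - P * coerciveWeight s y)
      = fun y => deriv u y - P * deriv (coerciveWeight s) y := by
    ext y
    exact ((hu y).hasDerivAt.sub ((hψ y).hasDerivAt.const_mul P)).deriv
  have h1 := hloc.deriv_eq_zero
  have hu' := hu.continuous
  have hψ' := hψ.continuous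
  have h2 := hloc.deriv_deriv_nonpos (by fun_prop)
  have hψ2 := (hasDerivAt_deriv_coerciveWeight s x).differentiableAt.hasDerivAt
  have hd2 : deriv (fun y => deriv u y - P * deriv (coerciveWeight s) y) x
      = deriv (deriv u) x - P * deriv (deriv (coerciveWeight s)) x :=
    ((hu2 x).hasDerivAt.sub (hψ2.const_mul P)).deriv
  rw [hd, hd2] at h2
  rw [hd] at h1
  constructor
  · have : deriv u x = P * deriv (coerciveWeight s) x := by linarith
    rw [this, abs_mul, abs_of_nonneg hP]
    exact mul_le_of_le_one_right hP (abs_deriv_coerciveWeight_le hs0 hs x)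
  · have := mul_le_of_le_one_right hP (deriv_deriv_coerciveWeight_le hs0 hs x)
    linarith

/-- Derivative identities and bounds at a point where a penalized modulus is attained. -/
lemma deriv_bounds_at_two_point_max {s P x y w : ℝ} (hs0 : 0 < s) (hs : s ≤ 1 / 2) (hP : 0 ≤ P)
    {u Ω : ℝ → ℝ} (hu : Differentiable ℝ u) (hu2 : Differentiable ℝ (deriv u))
    (hΩ : HasDerivAt Ω w (x - y))
    (hmax : ∀ a b, u a - u b ≤ Ω (a - b) + P * (coerciveWeight s a + coerciveWeight s b))
    (heq : u x - u y = Ω (x - y) + P * (coerciveWeight s x + coerciveWeight s y)) :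
    |deriv u x - w| ≤ P ∧ |deriv u y - w| ≤ P ∧
      deriv (deriv u) x - deriv (deriv u) y ≤ 2 * P := by
  have hψ := differentiable_coerciveWeight s
  have hψ1 := fun z => abs_deriv_coerciveWeight_le hs0 hs z
  refine ⟨?_, ?_, ?_⟩
  · have hloc : IsLocalMax (fun a => u a - Ω (a - y) - P * coerciveWeight s a) x :=
      Eventually.of_forall fun a => by
        have := hmax a y
        simp only; linarith
    have hd := ((hu x).hasDerivAt.sub
      (HasDerivAt.comp_sub_const x y hΩ)).sub ((hψ x).hasDerivAt.const_mul P)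
    have h0 := hloc.hasDerivAt_eq_zero hd
    have : deriv u x - w = P * deriv (coerciveWeight s) x := by linarith
    rw [this, abs_mul, abs_of_nonneg hP]
    exact mul_le_of_le_one_right hP (hψ1 x)
  · have hloc : IsLocalMax (fun b => -u b - Ω (x - b) - P * coerciveWeight s b) y :=
      Eventually.of_forall fun b => by
        have := hmax x b
        simp only; linarith
    have hd := ((hu y).hasDerivAt.neg.sub
      (HasDerivAt.comp_const_sub x y hΩ)).sub ((hψ y).hasDerivAt.const_mul P)
    have h0 := hloc.hasDerivAt_eq_zero hd
    have : deriv u y - w = -(P * deriv (coerciveWeight s) y) := by linarith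
    rw [this, abs_neg, abs_mul, abs_of_nonneg hP]
    exact mul_le_of_le_one_right hP (hψ1 y)
  · set F : ℝ → ℝ := fun z => u (x + z) - u (y + z)
      - P * (coerciveWeight s (x + z) + coerciveWeight s (y + z)) with hF
    have hloc : IsLocalMax F 0 := Eventually.of_forall fun z => by
      have := hmax (x + z) (y + z)
      rw [add_sub_add_right_eq_sub] at this
      simp only [hF, add_zero]; linarith
    have hd : deriv F = fun z => deriv u (x + z) - deriv u (y + z)
        - P * (deriv (coerciveWeight s) (x + z) + deriv (coerciveWeight s) (y + z)) := by
      ext z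
      exact (((hu _).hasDerivAt.comp_const_add x z).sub
        ((hu _).hasDerivAt.comp_const_add y z)).sub
        ((((hψ _).hasDerivAt.comp_const_add x z).add
        ((hψ _).hasDerivAt.comp_const_add y z)).const_mul P) |>.deriv
    have hψ2 := fun z => (hasDerivAt_deriv_coerciveWeight s z).differentiableAt
    have hd2 : deriv (deriv F) 0 = deriv (deriv u) (x + 0) - deriv (deriv u) (y + 0)
        - P * (deriv (deriv (coerciveWeight s)) (x + 0)
          + deriv (deriv (coerciveWeight s)) (y + 0)) := by
      rw [hd]
      exact (((hu2 _).hasDerivAt.comp_const_add x 0).sub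
        ((hu2 _).hasDerivAt.comp_const_add y 0)).sub
        ((((hψ2 _).hasDerivAt.comp_const_add x 0).add
        ((hψ2 _).hasDerivAt.comp_const_add y 0)).const_mul P) |>.deriv
    have hu' := hu.continuous
    have hψ' := hψ.continuous
    have h2 := hloc.deriv_deriv_nonpos (by rw [hF]; fun_prop)
    rw [hd2, add_zero, add_zero] at h2
    have h3 := mul_le_of_le_one_right hP (deriv_deriv_coerciveWeight_le hs0 hs x)
    have h4 := mul_le_of_le_one_right hP (deriv_deriv_coerciveWeight_le hs0 hs y)
    linarith

lemma le_of_forall_pos_le_add_mul {a b C : ℝ} (hC : 0 < C) (h : ∀ η > 0, a ≤ b + η * C) :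
    a ≤ b :=
  le_of_forall_pos_le_add fun δ hδ => by
    have := h (δ / C) (by positivity)
    rwa [div_mul_cancel₀ _ hC.ne'] at this

lemma abs_le_of_coerciveWeight_le {s x R : ℝ} (hs : 0 < s) (h : coerciveWeight s x ≤ R) :
    |x| ≤ R ^ (1 / s) := by
  have h1 := (abs_rpow_le_coerciveWeight hs.le x).trans h
  have h2 := Real.rpow_le_rpow (by positivity) h1 (show 0 ≤ 1 / s by positivity)
  rwa [← Real.rpow_mul (abs_nonneg x), mul_one_div_cancel hs.ne', Real.rpow_one] at h2

lemma continuous_coerciveWeight (s : ℝ) : Continuous (coerciveWeight s) :=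
  (differentiable_coerciveWeight s).continuous

lemma integrable_sq_and_integral_sq_le {f : ℝ → ℝ} (hf : Continuous f) {K : ℝ} (hK : 0 ≤ K)
    (h : eLpNorm f 2 volume ≤ ENNReal.ofReal K) :
    Integrable (fun x => f x ^ 2) ∧ ∫ x, f x ^ 2 ≤ K ^ 2 := by
  have hm : MemLp f 2 volume := ⟨hf.aestronglyMeasurable, h.trans_lt ENNReal.ofReal_lt_top⟩
  refine ⟨hm.integrable_sq, ?_⟩
  rw [hm.eLpNorm_eq_integral_rpow_norm (by simp) (by simp)] at h
  rw [ENNReal.ofReal_le_ofReal_iff hK] at h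
  simp only [ENNReal.toReal_ofNat, Real.rpow_ofNat, Real.norm_eq_abs, sq_abs] at h
  have h0 : 0 ≤ ∫ x, f x ^ 2 := integral_nonneg fun x => sq_nonneg _
  rw [← one_div, ← Real.sqrt_eq_rpow] at h
  exact (Real.sqrt_le_left hK).1 h

/-! ### Decay of the supremum norm -/

/-- A solution of a linear drift-diffusion equation whose `L²` norm stays bounded decays at a rate
that does not depend on its initial size. -/
lemma le_rpow_neg_of_drift_diffusion {s ε K B : ℝ} (hs0 : 0 < s) (hs : s < 1 / 2) (hε0 : 0 < ε)
    (hε : ε ≤ 1) (hK : 0 < K) (hB : 0 < B) {u b : ℝ → ℝ → ℝ}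
    (huB : ∀ x t, 0 < t → |u x t| ≤ B) (hbB : ∀ x t, 0 < t → |b x t| ≤ B)
    (hcont : ContinuousOn (fun p : ℝ × ℝ => u p.1 p.2) {p | 0 < p.2})
    (hdt : ∀ x t, 0 < t → DifferentiableAt ℝ (fun r => u x r) t)
    (hdx : ∀ t, 0 < t → Differentiable ℝ fun x => u x t)
    (hdxx : ∀ t, 0 < t → Differentiable ℝ (deriv fun x => u x t))
    (hint : ∀ x t, 0 < t → Integrable fun y : ℝ => (u x t - u y t) / |x - y| ^ (1 + 2 * s))
    (heqn : ∀ x t, 0 < t → deriv (fun r => u x r) t + b x t * deriv (fun y => u y t) x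
      + fracLap s (fun y => u y t) x - ε * deriv (deriv fun y => u y t) x = 0)
    (hL2 : ∀ t, 0 < t → eLpNorm (fun x => u x t) 2 volume ≤ ENNReal.ofReal K)
    {x₁ t₁ : ℝ} (ht₁ : 0 < t₁) :
    u x₁ t₁ ≤ (4 * s * (fracC s * K ^ (-(4 * s)) / 2) * t₁) ^ (-(1 / (4 * s))) := by
  have hC := fracC_pos hs0 (by linarith)
  set c := fracC s * K ^ (-(4 * s)) / 2 with hc
  have hc0 : 0 < c := by positivity
  set g : ℝ → ℝ := fun t => (4 * s * c * t) ^ (-(1 / (4 * s))) with hg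
  change u x₁ t₁ ≤ g t₁
  have hg0 : ∀ t, 0 < t → 0 < g t := fun t ht => by simp only [hg]; positivity
  set δ := B ^ (-(4 * s)) / (4 * s * c) with hδ
  have hδ0 : 0 < δ := by positivity
  have hgδ : g δ = B := by
    simp only [hg]
    have : 4 * s * c * δ = B ^ (-(4 * s)) := by rw [hδ]; field_simp
    rw [this, ← Real.rpow_mul hB.le]
    have : -(4 * s) * -(1 / (4 * s)) = 1 := by field_simp
    rw [this, Real.rpow_one]
  have hganti : ∀ r t, 0 < r → r ≤ t → g t ≤ g r := fun r t hr hrt =>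
    Real.rpow_le_rpow_of_nonpos (by positivity) (by gcongr) (by
      have : 0 < 1 / (4 * s) := by positivity
      linarith)
  rcases le_total t₁ δ with hle | hle
  · have := hganti t₁ δ ht₁ hle
    have := (le_abs_self _).trans (huB x₁ t₁ ht₁)
    linarith
  have hgderiv : ∀ t, 0 < t → HasDerivAt g (-(c * g t ^ (1 + 4 * s))) t := by
    intro t ht
    have h1 : HasDerivAt (fun r : ℝ => 4 * s * c * r) (4 * s * c) t := by
      simpa using (hasDerivAt_id t).const_mul (4 * s * c)
    have h2 := h1.rpow_const (p := -(1 / (4 * s))) (Or.inl (by positivity))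
    refine h2.congr_deriv ?_
    have e : g t ^ (1 + 4 * s) = (4 * s * c * t) ^ (-(1 / (4 * s)) - 1) := by
      simp only [hg]
      rw [← Real.rpow_mul (by positivity)]
      congr 1; field_simp; ring
    rw [e]; field_simp
  have hJ := incrementMass_nonneg s
  set lam := B + fracC s * incrementMass s + 2 with hlam
  have hlam0 : 0 < lam := by positivity
  refine le_of_forall_pos_le_add_mul (C := exp (lam * t₁) * coerciveWeight s x₁)
    (mul_pos (exp_pos _) (by linarith [one_le_coerciveWeight hs0.le x₁])) fun η hη => ?_
  by_contra! hcon
  set G : ℝ → ℝ → ℝ := fun x t => u x t - g t - η * (exp (lam * t) * coerciveWeight s x) with hG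
  have hψc := continuous_coerciveWeight s
  have hsub : (univ ×ˢ Icc δ t₁ : Set (ℝ × ℝ)) ⊆ {p | 0 < p.2} := fun p hp =>
    hδ0.trans_le hp.2.1
  obtain ⟨x, t, ht, hG0, hGle, hGlt⟩ := exists_first_touching (G := G) (a := δ) (b := t₁)
    (S := Metric.closedBall 0 ((B / η) ^ (1 / s))) (isCompact_closedBall _ _)
    (by
      have hgc : ContinuousOn (fun p : ℝ × ℝ => g p.2) (univ ×ˢ Icc δ t₁) := fun p hp =>
        ((hgderiv p.2 (hsub hp)).continuousAt.comp continuousAt_snd).continuousWithinAt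
      refine ((hcont.mono hsub).sub hgc).sub (Continuous.continuousOn (by fun_prop)))
    (by
      intro x t ht h0
      have htpos : 0 < t := hδ0.trans_le ht.1
      rw [mem_closedBall_zero_iff, Real.norm_eq_abs]
      refine abs_le_of_coerciveWeight_le hs0 ((le_div_iff₀ hη).2 ?_)
      have h1 : 1 ≤ exp (lam * t) := Real.one_le_exp (by positivity)
      have h2 := one_le_coerciveWeight hs0.le x
      have h3 : coerciveWeight s x ≤ exp (lam * t) * coerciveWeight s x :=
        le_mul_of_one_le_left (by linarith) h1
      have h4 := mul_le_mul_of_nonneg_left h3 hη.le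
      have h5 := (le_abs_self _).trans (huB x t htpos)
      have h6 := hg0 t htpos
      simp only [hG] at h0
      linarith)
    (by
      intro x
      have h5 := (le_abs_self _).trans (huB x δ hδ0)
      have h2 := one_le_coerciveWeight hs0.le x
      have : 0 < η * (exp (lam * δ) * coerciveWeight s x) := by positivity
      simp only [hG]
      linarith)
    (x₁ := x₁) (t₁ := t₁) ⟨hle, le_rfl⟩ (by simp only [hG]; linarith)
  have htpos : 0 < t := hδ0.trans ht.1
  set P := η * exp (lam * t) with hP
  have hP0 : 0 < P := by positivity
  have hψ1 := one_le_coerciveWeight hs0.le x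
  have hmax : ∀ y, u y t - P * coerciveWeight s y ≤ u x t - P * coerciveWeight s x := by
    intro y
    have := hGle y
    simp only [hG] at this hG0
    linarith
  have hux : u x t = g t + P * coerciveWeight s x := by
    simp only [hG] at hG0; linarith
  have hgt := hg0 t htpos
  have hgu : g t ≤ u x t := by rw [hux]; linarith [mul_pos hP0 (by linarith : 0 < coerciveWeight s x)]
  obtain ⟨hd1, hd2⟩ := deriv_bounds_at_max hs0 hs.le hP0.le (hdx t htpos) (hdxx t htpos) hmax
  obtain ⟨hsq, hsqK⟩ := integrable_sq_and_integral_sq_le (hdx t htpos).continuous hK.le (hL2 t htpos)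
  have hfrac := fracLap_lower_bound_at_max hs0 hs hP0.le hK (hdx t htpos).continuous
    (hint x t htpos) hsq hsqK (hgt.trans_le hgu) hmax
  have hpow : g t ^ (1 + 4 * s) ≤ u x t ^ (1 + 4 * s) :=
    Real.rpow_le_rpow hgt.le hgu (by positivity)
  have hGd : HasDerivAt (G x) (deriv (fun r => u x r) t - -(c * g t ^ (1 + 4 * s))
      - η * (exp (lam * t) * lam * coerciveWeight s x)) t := by
    have he : HasDerivAt (fun r => exp (lam * r)) (exp (lam * t) * lam) t := by
      simpa using ((hasDerivAt_id t).const_mul lam).exp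
    exact ((hdt x t htpos).hasDerivAt.sub (hgderiv t htpos)).sub
      ((he.mul_const _).const_mul η)
  have hnn := hGd.nonneg_of_left_lt ht.1 fun r hr => by rw [hG0]; exact hGlt r hr
  have heq := heqn x t htpos
  have hbd : -(b x t * deriv (fun y => u y t) x) ≤ B * P := by
    refine (neg_le_abs _).trans ?_
    rw [abs_mul]
    exact mul_le_mul (hbB x t htpos) hd1 (abs_nonneg _) hB.le
  have hεd : ε * deriv (deriv fun y => u y t) x ≤ P := by
    have := mul_le_mul_of_nonneg_left hd2 hε0.le
    have := mul_le_of_le_one_left hP0.le hε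
    linarith
  have hcg : c * g t ^ (1 + 4 * s) ≤ fracC s * (u x t ^ (1 + 4 * s) * K ^ (-(4 * s)) / 2) := by
    calc c * g t ^ (1 + 4 * s) ≤ c * u x t ^ (1 + 4 * s) := by gcongr
      _ = _ := by rw [hc]; ring
  have hlamP : lam * P ≤ η * (exp (lam * t) * lam * coerciveWeight s x) := by
    calc lam * P = lam * P * 1 := by ring
      _ ≤ lam * P * coerciveWeight s x := by gcongr
      _ = _ := by rw [hP]; ring
  have hlamP' : lam * P = B * P + fracC s * (P * incrementMass s) + 2 * P := by rw [hlam]; ring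
  linarith

/-! ### Propagation of a Hölder modulus -/

/-- The scale at which the Hölder modulus reaches the size of the solution. -/
noncomputable def holderScale (s : ℝ) : ℝ := (2 / fracC s) ^ (1 / (1 - 2 * s))

/-- The constant of the limiting Hölder modulus. -/
noncomputable def holderConst (s : ℝ) : ℝ := 2 * holderScale s ^ (-(1 / 4) : ℝ)

lemma holderScale_pos {s : ℝ} (hs0 : 0 < s) (hs : s < 1) : 0 < holderScale s := by
  have := fracC_pos hs0 hs
  unfold holderScale
  positivity

lemma holderConst_mul_rpow {s q : ℝ} (hs0 : 0 < s) (hs : s < 1) (hq : 0 ≤ q) :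
    holderConst s * q ^ (1 / 4 : ℝ) = 2 * (q / holderScale s) ^ (1 / 4 : ℝ) := by
  have hL := holderScale_pos hs0 hs
  rw [holderConst, Real.div_rpow hq hL.le, Real.rpow_neg hL.le]
  field_simp

lemma holderConst_mul_rpow_le {s q : ℝ} (hs38 : 3 / 8 < s) (hs : s < 1 / 2) (hq : 0 < q)
    (h2 : holderConst s * q ^ (1 / 4 : ℝ) ≤ 2) :
    holderConst s * q ^ (1 / 4 : ℝ) ≤ fracC s * q ^ (1 - 2 * s) := by
  have hC : 0 < fracC s := fracC_pos (by linarith) (by linarith)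
  have hL := holderScale_pos (s := s) (by linarith) (by linarith)
  rw [holderConst_mul_rpow (by linarith) (by linarith) hq.le] at h2 ⊢
  have hle : q / holderScale s ≤ 1 := by
    by_contra! hcon
    have := Real.one_lt_rpow hcon (show (0 : ℝ) < 1 / 4 by norm_num)
    linarith
  have hLp : holderScale s ^ (1 - 2 * s) = 2 / fracC s := by
    rw [holderScale, ← Real.rpow_mul (by positivity), one_div_mul_cancel (by linarith),
      Real.rpow_one]
  calc 2 * (q / holderScale s) ^ (1 / 4 : ℝ) ≤ 2 * (q / holderScale s) ^ (1 - 2 * s) := by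
        gcongr 2 * ?_
        exact Real.rpow_le_rpow_of_exponent_ge (by positivity) hle (by linarith)
    _ = fracC s * q ^ (1 - 2 * s) := by
        rw [Real.div_rpow hq.le hL.le, hLp]; field_simp

/-- The modulus `(q + r) ^ (1 / 4)` dominates nonlinear steepening by fractional dissipation. -/
lemma modulus_dissipation_bound {s ξ r : ℝ} (hs38 : 3 / 8 < s) (hs : s < 1 / 2) (hξ : 0 < ξ)
    (hr : 0 < r) (h2 : holderConst s * (ξ + r) ^ (1 / 4 : ℝ) ≤ 2) :
    holderConst s * (1 / 4 * (ξ + r) ^ (1 / 4 - 1 : ℝ))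
        * (holderConst s * (ξ + r) ^ (1 / 4 : ℝ) + fracC s * r ^ (1 - 2 * s))
      ≤ fracC s * (holderConst s * (ξ + r) ^ (1 / 4 : ℝ) * ξ ^ (-(2 * s)) / 2) := by
  have hC : 0 < fracC s := fracC_pos (by linarith) (by linarith)
  have hq : 0 < ξ + r := by positivity
  have hH : 0 < holderConst s := by
    have := holderScale_pos (s := s) (by linarith) (by linarith)
    unfold holderConst; positivity
  have h1 := holderConst_mul_rpow_le hs38 hs hq h2
  have h3 : r ^ (1 - 2 * s) ≤ (ξ + r) ^ (1 - 2 * s) :=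
    Real.rpow_le_rpow hr.le (by linarith) (by linarith)
  have h4 : (ξ + r) ^ (-(2 * s)) ≤ ξ ^ (-(2 * s)) :=
    Real.rpow_le_rpow_of_nonpos hξ (by linarith) (by linarith)
  calc _ ≤ holderConst s * (1 / 4 * (ξ + r) ^ (1 / 4 - 1 : ℝ))
          * (fracC s * (ξ + r) ^ (1 - 2 * s) + fracC s * (ξ + r) ^ (1 - 2 * s)) := by gcongr
    _ = fracC s * (holderConst s * (ξ + r) ^ (1 / 4 : ℝ) * (ξ + r) ^ (-(2 * s)) / 2) := by
        rw [Real.rpow_sub hq, Real.rpow_sub hq, Real.rpow_neg hq.le, Real.rpow_one]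
        field_simp; ring
    _ ≤ _ := by gcongr

lemma modulus_hasDerivAt {H r d : ℝ} (hr : 0 < r) (hd : d ≠ 0) :
    ∃ w, HasDerivAt (fun d => H * (|d| + r) ^ (1 / 4 : ℝ)) w d ∧
      |w| = |H| * (1 / 4 * (|d| + r) ^ (1 / 4 - 1 : ℝ)) := by
  have h1 := ((hasDerivAt_abs hd).add_const r).rpow_const (p := (1 / 4 : ℝ))
    (Or.inl (by positivity))
  refine ⟨_, h1.const_mul H, ?_⟩
  have hs : |((SignType.sign d : SignType) : ℝ)| = 1 := by
    rcases lt_or_gt_of_ne hd with h | h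
    · simp [sign_neg h]
    · simp [sign_pos h]
  have hp : 0 ≤ (|d| + r) ^ (1 / 4 - 1 : ℝ) := by positivity
  rw [abs_mul, abs_mul, abs_mul, hs, abs_of_nonneg hp]
  norm_num

/-- A solution bounded by one acquires a Hölder modulus of continuity after a fixed time. -/
lemma holder_of_abs_le_one {s ε : ℝ} (hs38 : 3 / 8 < s) (hs : s < 1 / 2) (hε0 : 0 < ε)
    (hε : ε ≤ 1) {θ : ℝ → ℝ → ℝ} (hθ : IsClassicalSolution s ε θ {p : ℝ × ℝ | 0 < p.2})
    {t₀ t₁ : ℝ} (ht₀ : 0 < t₀) (ht₁ : holderScale s ^ (2 * s) = 2 * s * fracC s * (t₁ - t₀))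
    (hone : ∀ x t, t₀ ≤ t → |θ x t| ≤ 1) (x₁ y₁ : ℝ) :
    θ x₁ t₁ - θ y₁ t₁ ≤ holderConst s * |x₁ - y₁| ^ (1 / 4 : ℝ) := by
  have hs0 : 0 < s := by linarith
  have hC := fracC_pos hs0 (by linarith)
  have hL := holderScale_pos hs0 (by linarith)
  set H := holderConst s with hH
  have hH0 : 0 < H := by rw [hH, holderConst]; positivity
  have ht01 : t₀ < t₁ := by
    have h1 : 0 < 2 * s * fracC s * (t₁ - t₀) := ht₁ ▸ (by positivity)
    have := pos_of_mul_pos_right h1 (by positivity)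
    linarith
  have hHL : H * holderScale s ^ (1 / 4 : ℝ) = 2 := by
    rw [hH, holderConst_mul_rpow hs0 (by linarith) hL.le, div_self hL.ne', Real.one_rpow, mul_one]
  refine le_of_forall_pos_le_add_mul hH0 fun μ hμ => ?_
  set ρ := μ ^ 4 with hρ
  have hρ0 : 0 < ρ := by positivity
  have hρμ : ρ ^ (1 / 4 : ℝ) = μ := by
    rw [hρ, ← Real.rpow_natCast, ← Real.rpow_mul hμ.le]; norm_num
  suffices hmain : θ x₁ t₁ - θ y₁ t₁ ≤ H * (|x₁ - y₁| + ρ) ^ (1 / 4 : ℝ) by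
    have h1 := Real.rpow_add_le_add_rpow (p := 1 / 4) (abs_nonneg (x₁ - y₁)) hρ0.le (by norm_num)
      (by norm_num)
    rw [hρμ] at h1
    have := mul_le_mul_of_nonneg_left h1 hH0.le
    linarith
  -- the shrinking regularization scale
  set r : ℝ → ℝ := fun t => (ρ ^ (2 * s) + 2 * s * fracC s * (t₁ - t)) ^ (1 / (2 * s)) with hr
  have hbase : ∀ t ≤ t₁, ρ ^ (2 * s) ≤ ρ ^ (2 * s) + 2 * s * fracC s * (t₁ - t) := fun t ht => by
    have : 0 ≤ 2 * s * fracC s * (t₁ - t) := mul_nonneg (by positivity) (by linarith)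
    linarith
  have hρs : 0 < ρ ^ (2 * s) := by positivity
  have hinv : ∀ a : ℝ, 0 ≤ a → (a ^ (2 * s)) ^ (1 / (2 * s)) = a := fun a ha => by
    rw [← Real.rpow_mul ha, mul_one_div_cancel (by positivity), Real.rpow_one]
  have hrρ : ∀ t ≤ t₁, ρ ≤ r t := fun t ht => by
    calc ρ = (ρ ^ (2 * s)) ^ (1 / (2 * s)) := (hinv ρ hρ0.le).symm
      _ ≤ r t := Real.rpow_le_rpow hρs.le (hbase t ht) (by positivity)
  have hr1 : r t₁ = ρ := by simp only [hr, sub_self, mul_zero, add_zero]; exact hinv ρ hρ0.le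
  have hr0 : holderScale s ≤ r t₀ := by
    calc holderScale s = (holderScale s ^ (2 * s)) ^ (1 / (2 * s)) := (hinv _ hL.le).symm
      _ ≤ r t₀ := Real.rpow_le_rpow (by positivity) (by rw [ht₁]; linarith) (by positivity)
  have hrderiv : ∀ t ≤ t₁, HasDerivAt r (-(fracC s * r t ^ (1 - 2 * s))) t := by
    intro t ht
    have hb : 0 < ρ ^ (2 * s) + 2 * s * fracC s * (t₁ - t) := hρs.trans_le (hbase t ht)
    have h1 : HasDerivAt (fun t => ρ ^ (2 * s) + 2 * s * fracC s * (t₁ - t))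
        (-(2 * s * fracC s)) t := by
      simpa using (((hasDerivAt_id t).const_sub t₁).const_mul (2 * s * fracC s)).const_add
        (ρ ^ (2 * s))
    refine (h1.rpow_const (p := 1 / (2 * s)) (Or.inl hb.ne')).congr_deriv ?_
    have e : r t ^ (1 - 2 * s)
        = (ρ ^ (2 * s) + 2 * s * fracC s * (t₁ - t)) ^ (1 / (2 * s) - 1) := by
      simp only [hr]
      rw [← Real.rpow_mul hb.le]
      congr 1; field_simp
    rw [e]; field_simp
  have hJ := incrementMass_nonneg s
  set lam := H * (1 / 4 * ρ ^ (1 / 4 - 1 : ℝ)) + fracC s * (1 + incrementMass s) + 3 with hlam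
  have hlam0 : 0 < lam := by positivity
  have hψ1 := one_le_coerciveWeight hs0.le
  refine le_of_forall_pos_le_add_mul
    (C := exp (lam * t₁) * (coerciveWeight s x₁ + coerciveWeight s y₁))
    (mul_pos (exp_pos _) (by linarith [hψ1 x₁, hψ1 y₁])) fun η hη => ?_
  by_contra! hcon
  set G : ℝ × ℝ → ℝ → ℝ := fun p t => θ p.1 t - θ p.2 t - H * (|p.1 - p.2| + r t) ^ (1 / 4 : ℝ)
    - η * (exp (lam * t) * (coerciveWeight s p.1 + coerciveWeight s p.2)) with hG
  have hψc := continuous_coerciveWeight s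
  obtain ⟨⟨x, y⟩, t, ht, hG0, hGle, hGlt⟩ := exists_first_touching (G := G) (a := t₀) (b := t₁)
    (S := Metric.closedBall 0 ((2 / η) ^ (1 / s))) (isCompact_closedBall _ _)
    (by
      have hpos : ∀ p ∈ (univ ×ˢ Icc t₀ t₁ : Set ((ℝ × ℝ) × ℝ)), 0 < p.2 := fun p hp =>
        ht₀.trans_le hp.2.1
      have c1 : ContinuousOn (fun p : (ℝ × ℝ) × ℝ => θ p.1.1 p.2) (univ ×ˢ Icc t₀ t₁) :=
        hθ.cont.comp (f := fun p : (ℝ × ℝ) × ℝ => (p.1.1, p.2)) (by fun_prop) hpos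
      have c2 : ContinuousOn (fun p : (ℝ × ℝ) × ℝ => θ p.1.2 p.2) (univ ×ˢ Icc t₀ t₁) :=
        hθ.cont.comp (f := fun p : (ℝ × ℝ) × ℝ => (p.1.2, p.2)) (by fun_prop) hpos
      have c3 : ContinuousOn (fun p : (ℝ × ℝ) × ℝ => r p.2) (univ ×ˢ Icc t₀ t₁) := fun p hp =>
        ((hrderiv p.2 hp.2.2).continuousAt.comp continuousAt_snd).continuousWithinAt
      have c4 : ContinuousOn (fun p : (ℝ × ℝ) × ℝ => (|p.1.1 - p.1.2| + r p.2) ^ (1 / 4 : ℝ))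
          (univ ×ˢ Icc t₀ t₁) :=
        (ContinuousOn.add (Continuous.continuousOn (by fun_prop)) c3).rpow_const
          fun p _ => Or.inr (by norm_num)
      exact ((c1.sub c2).sub (c4.const_mul H)).sub (Continuous.continuousOn (by fun_prop)))
    (by
      rintro ⟨a, b⟩ t ht h0
      have htpos : 0 < t := ht₀.trans_le ht.1
      have h1 : 1 ≤ exp (lam * t) := Real.one_le_exp (by positivity)
      have h3 : coerciveWeight s a + coerciveWeight s b
          ≤ exp (lam * t) * (coerciveWeight s a + coerciveWeight s b) :=
        le_mul_of_one_le_left (by linarith [hψ1 a, hψ1 b]) h1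
      have h4 := mul_le_mul_of_nonneg_left h3 hη.le
      have h5 := (abs_le.1 (hone a t ht.1)).2
      have h6 := (abs_le.1 (hone b t ht.1)).1
      have h7 : 0 ≤ H * (|a - b| + r t) ^ (1 / 4 : ℝ) := by
        have := hρ0.trans_le (hrρ t ht.2)
        positivity
      simp only [hG] at h0
      have h8 : η * (coerciveWeight s a + coerciveWeight s b) ≤ 2 := by linarith
      have h9 := mul_pos hη (by linarith [hψ1 a] : 0 < coerciveWeight s a)
      have h10 := mul_pos hη (by linarith [hψ1 b] : 0 < coerciveWeight s b)
      rw [mem_closedBall_zero_iff, Prod.norm_def, sup_le_iff, Real.norm_eq_abs, Real.norm_eq_abs]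
      exact ⟨abs_le_of_coerciveWeight_le hs0 ((le_div_iff₀ hη).2 (by linarith)),
        abs_le_of_coerciveWeight_le hs0 ((le_div_iff₀ hη).2 (by linarith))⟩)
    (by
      rintro ⟨a, b⟩
      have h5 := (abs_le.1 (hone a t₀ le_rfl)).2
      have h6 := (abs_le.1 (hone b t₀ le_rfl)).1
      have h7 : 0 < η * (exp (lam * t₀) * (coerciveWeight s a + coerciveWeight s b)) :=
        mul_pos hη (mul_pos (exp_pos _) (by linarith [hψ1 a, hψ1 b]))
      have h8 : H * holderScale s ^ (1 / 4 : ℝ) ≤ H * (|a - b| + r t₀) ^ (1 / 4 : ℝ) := by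
        gcongr
        linarith [abs_nonneg (a - b)]
      simp only [hG]
      linarith)
    (x₁ := (x₁, y₁)) (t₁ := t₁) ⟨ht01.le, le_rfl⟩ (by simp only [hG, hr1]; linarith)
  have htpos : 0 < t := ht₀.trans ht.1
  set P := η * exp (lam * t) with hP
  have hP0 : 0 < P := by positivity
  have hρr := hrρ t ht.2
  have hrt : 0 < r t := hρ0.trans_le hρr
  set E := P * (coerciveWeight s x + coerciveWeight s y) with hE
  have hEP : 2 * P ≤ E := by
    have := mul_le_mul_of_nonneg_left (add_le_add (hψ1 x) (hψ1 y)) hP0.le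
    linarith
  have hmax : ∀ a b, θ a t - θ b t ≤ H * (|a - b| + r t) ^ (1 / 4 : ℝ)
      + P * (coerciveWeight s a + coerciveWeight s b) := by
    intro a b
    have := hGle (a, b)
    simp only [hG] at this
    linarith
  have heq : θ x t - θ y t = H * (|x - y| + r t) ^ (1 / 4 : ℝ) + E := by
    simp only [hG] at hG0
    linarith
  have hxy : x ≠ y := by
    rintro rfl
    have : 0 < H * (|x - x| + r t) ^ (1 / 4 : ℝ) := by positivity
    linarith
  have hξ : 0 < |x - y| := abs_pos.2 (sub_ne_zero.2 hxy)
  have hdx : Differentiable ℝ fun z => θ z t := fun z => hθ.diff_x (z, t) htpos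
  have hdxx : Differentiable ℝ (deriv fun z => θ z t) := fun z => hθ.diff_xx (z, t) htpos
  obtain ⟨w, hw, hwabs⟩ := modulus_hasDerivAt (H := H) hrt (sub_ne_zero.2 hxy)
  rw [abs_of_pos hH0] at hwabs
  obtain ⟨hd1, hd2, hd3⟩ := deriv_bounds_at_two_point_max hs0 hs.le hP0.le hdx hdxx hw hmax heq
  have hfrac := fracLap_sub_lower_bound hs0 hs hP0.le hxy hdx.continuous
    (hθ.integrable (x, t) htpos) (hθ.integrable (y, t) htpos)
    (ω := fun q => H * (q + r t) ^ (1 / 4 : ℝ))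
    (by
      intro a ha b hb hab
      have ha' : 0 ≤ a := ha
      simp only
      gcongr)
    (by
      have h1 : (3 * |x - y| + r t) ^ (1 / 4 : ℝ) ≤ (3 * (|x - y| + r t)) ^ (1 / 4 : ℝ) :=
        Real.rpow_le_rpow (by positivity) (by linarith) (by norm_num)
      have h3 : (3 : ℝ) ^ (1 / 4 : ℝ) ≤ 3 / 2 := by
        calc (3 : ℝ) ^ (1 / 4 : ℝ) ≤ ((3 / 2) ^ (4 : ℝ)) ^ (1 / 4 : ℝ) :=
              Real.rpow_le_rpow (by norm_num) (by norm_num) (by norm_num)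
          _ = 3 / 2 := by rw [← Real.rpow_mul (by norm_num)]; norm_num
      rw [Real.mul_rpow (by norm_num) (by positivity)] at h1
      have h4 : (3 : ℝ) ^ (1 / 4 : ℝ) * (|x - y| + r t) ^ (1 / 4 : ℝ)
          ≤ 3 / 2 * (|x - y| + r t) ^ (1 / 4 : ℝ) := by gcongr
      have := mul_le_mul_of_nonneg_left (h1.trans h4) hH0.le
      linarith)
    hmax heq
  set D := H * (1 / 4 * (|x - y| + r t) ^ (1 / 4 - 1 : ℝ)) with hD
  set W := H * (|x - y| + r t) ^ (1 / 4 : ℝ) with hW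
  have hD0 : 0 ≤ D := by positivity
  have hW0 : 0 ≤ W := by positivity
  have hE0 : 0 ≤ E := by linarith
  have hθx := hone x t ht.1.le
  have hθy := hone y t ht.1.le
  have hW2 : W ≤ 2 := by
    have := (abs_le.1 hθx).2
    have := (abs_le.1 hθy).1
    linarith
  have hdiss : D * (W + fracC s * r t ^ (1 - 2 * s))
      ≤ fracC s * (W * |x - y| ^ (-(2 * s)) / 2) :=
    modulus_dissipation_bound hs38 hs hξ hrt hW2
  have hDρ : D ≤ H * (1 / 4 * ρ ^ (1 / 4 - 1 : ℝ)) := by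
    have : (|x - y| + r t) ^ (1 / 4 - 1 : ℝ) ≤ ρ ^ (1 / 4 - 1 : ℝ) :=
      Real.rpow_le_rpow_of_nonpos hρ0 (by linarith) (by norm_num)
    rw [hD]; gcongr
  have hGd : HasDerivAt (G (x, y)) (deriv (fun q => θ x q) t - deriv (fun q => θ y q) t
      - D * (-(fracC s * r t ^ (1 - 2 * s)))
      - η * (exp (lam * t) * lam * (coerciveWeight s x + coerciveWeight s y))) t := by
    have he : HasDerivAt (fun q => exp (lam * q)) (exp (lam * t) * lam) t := by
      simpa using ((hasDerivAt_id t).const_mul lam).exp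
    have hm : HasDerivAt (fun q => H * (|x - y| + r q) ^ (1 / 4 : ℝ))
        (D * (-(fracC s * r t ^ (1 - 2 * s)))) t := by
      refine ((((hrderiv t ht.2).const_add |x - y|).rpow_const (p := 1 / 4)
        (Or.inl (by positivity))).const_mul H).congr_deriv ?_
      rw [hD]; ring
    exact (((hθ.diff_t (x, t) htpos).hasDerivAt.sub (hθ.diff_t (y, t) htpos).hasDerivAt).sub
      hm).sub ((he.mul_const _).const_mul η)
  have hnn := hGd.nonneg_of_left_lt ht.1 fun q hq => by rw [hG0]; exact hGlt q hq
  have hex := hθ.eqn (x, t) htpos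
  have hey := hθ.eqn (y, t) htpos
  simp only at hex hey
  have hnl : -(θ x t * deriv (fun z => θ z t) x - θ y t * deriv (fun z => θ z t) y)
      ≤ (W + E) * D + 2 * P := by
    have h1 : -((W + E) * w) ≤ (W + E) * D := by
      have hWE : 0 ≤ W + E := add_nonneg hW0 hE0
      rw [← hwabs, ← mul_neg]
      exact mul_le_mul_of_nonneg_left (neg_le_abs w) hWE
    have h2 : ∀ a b : ℝ, |a| ≤ 1 → |b| ≤ P → |a * b| ≤ P := fun a b ha hb => by
      rw [abs_mul]
      calc |a| * |b| ≤ 1 * P := mul_le_mul ha hb (abs_nonneg _) zero_le_one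
        _ = P := one_mul P
    have h3 := (abs_le.1 (h2 _ _ hθx hd1)).1
    have h4 := (abs_le.1 (h2 _ _ hθy hd2)).2
    have h5 : θ x t * deriv (fun z => θ z t) x - θ y t * deriv (fun z => θ z t) y
        = (θ x t - θ y t) * w + θ x t * (deriv (fun z => θ z t) x - w)
          - θ y t * (deriv (fun z => θ z t) y - w) := by ring
    rw [h5, heq]
    linarith
  have hεd : ε * (deriv (deriv fun z => θ z t) x - deriv (deriv fun z => θ z t) y) ≤ 2 * P := by
    have h1 := mul_le_mul_of_nonneg_left hd3 hε0.le
    have h2 := mul_le_of_le_one_left (by positivity : 0 ≤ 2 * P) hε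
    linarith
  have hlamE : η * (exp (lam * t) * lam * (coerciveWeight s x + coerciveWeight s y)) = lam * E := by
    rw [hE, hP]; ring
  have hlow : E * D + fracC s * (2 * P * (1 + incrementMass s)) + 6 * P ≤ lam * E := by
    have h1 : E * D ≤ E * (H * (1 / 4 * ρ ^ (1 / 4 - 1 : ℝ))) := by gcongr
    have h2 : fracC s * (1 + incrementMass s) * (2 * P)
        ≤ fracC s * (1 + incrementMass s) * E := by gcongr
    rw [hlam]
    linarith
  rw [hlamE] at hnn
  linarith

/-! ### Eventual regularity -/

lemma fracLap_neg (s : ℝ) (u : ℝ → ℝ) (x : ℝ) :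
    fracLap s (fun y => -u y) x = -fracLap s u x := by
  have h : (fun y => (-u x - -u y) / |x - y| ^ (1 + 2 * s))
      = fun y => -((u x - u y) / |x - y| ^ (1 + 2 * s)) := by
    funext y; ring
  rw [fracLap, fracLap, h, integral_neg, mul_neg]

/-- A classical solution with bounded `L²` norm takes values in `[-1, 1]` after a time that depends
only on the bound and on `s`. -/
lemma abs_le_one_of_eLpNorm_le {s ε K : ℝ} {θ : ℝ → ℝ → ℝ} (hs0 : 0 < s) (hs : s < 1 / 2)
    (hε0 : 0 < ε) (hε : ε ≤ 1) (hK : 0 < K) (hθ : IsClassicalSolution s ε θ {p | 0 < p.2})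
    (hL2 : ∀ t, 0 < t → eLpNorm (fun x => θ x t) 2 volume ≤ ENNReal.ofReal K) (x : ℝ) {t : ℝ}
    (ht : 0 < t) (hlarge : 1 ≤ 4 * s * (fracC s * K ^ (-(4 * s)) / 2) * t) : |θ x t| ≤ 1 := by
  obtain ⟨B₀, hB₀⟩ := hθ.bounded
  have hB : ∀ x t, 0 < t → |θ x t| ≤ |B₀| + 1 := fun x t ht =>
    (hB₀ (x, t) ht).trans (by linarith [le_abs_self B₀])
  have hpow : (4 * s * (fracC s * K ^ (-(4 * s)) / 2) * t) ^ (-(1 / (4 * s))) ≤ 1 :=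
    Real.rpow_le_one_of_one_le_of_nonpos hlarge (neg_nonpos.2 (by positivity))
  have hB0 : 0 < |B₀| + 1 := by positivity
  rw [abs_le]
  constructor
  · have h := le_rpow_neg_of_drift_diffusion (u := fun x t => -θ x t) (b := θ) (x₁ := x) hs0 hs hε0
      hε hK hB0 (fun x t ht => by rw [abs_neg]; exact hB x t ht) hB hθ.cont.neg
      (fun x t ht => (hθ.diff_t (x, t) ht).neg) (fun t ht x => (hθ.diff_x (x, t) ht).neg)
      (fun t ht x => by
        rw [deriv.fun_neg']
        exact (hθ.diff_xx (x, t) ht).neg)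
      (fun x t ht => by
        refine (hθ.integrable (x, t) ht).neg.congr (Eventually.of_forall fun y => ?_)
        simp only [Pi.neg_apply]
        ring)
      (fun x t ht => by
        have := hθ.eqn (x, t) ht
        simp only at this
        rw [fracLap_neg, deriv.fun_neg', deriv.fun_neg', deriv.fun_neg]
        linarith)
      (fun t ht => by
        have := hL2 t ht
        rwa [← eLpNorm_neg] at this) ht
    linarith
  · exact (le_rpow_neg_of_drift_diffusion hs0 hs hε0 hε hK hB0 hB hB hθ.cont
      (fun x t ht => hθ.diff_t (x, t) ht) (fun t ht x => hθ.diff_x (x, t) ht)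
      (fun t ht x => hθ.diff_xx (x, t) ht) (fun x t ht => hθ.integrable (x, t) ht)
      (fun x t ht => hθ.eqn (x, t) ht) hL2 ht).trans hpow

/-- For `s = 1 / 2`, absolute convergence of the integral defining the fractional Laplacian forces
the derivative to vanish. -/
lemma deriv_eq_zero_of_integrable {u : ℝ → ℝ} {x : ℝ} (hu : DifferentiableAt ℝ u x)
    (hint : Integrable fun y => (u x - u y) / |x - y| ^ (2 : ℝ)) : deriv u x = 0 := by
  by_contra hne
  refine not_intervalIntegrable_of_sub_inv_isBigO_punctured (f := fun y =>
    (u x - u y) / |x - y| ^ (2 : ℝ)) (a := x) (b := x + 1) (c := x) ?_ (by simp)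
    left_mem_uIcc hint.intervalIntegrable
  have hslope := (hasDerivAt_iff_tendsto_slope.1 hu.hasDerivAt).norm
  have hpos : 0 < ‖deriv u x‖ := norm_pos_iff.2 hne
  refine Asymptotics.IsBigO.of_bound (2 / ‖deriv u x‖) ?_
  filter_upwards [hslope.eventually (lt_mem_nhds (half_lt_self hpos)), self_mem_nhdsWithin]
    with y hy hyx
  have hyx' : y - x ≠ 0 := sub_ne_zero.2 hyx
  have hquot : (u x - u y) / |x - y| ^ (2 : ℝ) = -(slope u x y * (y - x)⁻¹) := by
    have hsq : |x - y| ^ (2 : ℝ) = (y - x) ^ 2 := by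
      rw [Real.rpow_two, sq_abs]; ring
    rw [hsq, slope_def_field]
    field_simp
    ring
  rw [hquot, norm_neg, norm_mul, ← mul_assoc]
  have h1 : 1 ≤ 2 / ‖deriv u x‖ * ‖slope u x y‖ := by
    rw [div_mul_eq_mul_div, le_div_iff₀ hpos]
    linarith
  exact le_mul_of_one_le_left (norm_nonneg _) h1

/-- eventual Hölder regularity, uniform in the viscosity, for solutions of the
regularized slightly supercritical fractional Burgers equation with bounded `L²` norm. -/
theorem eventual_holder_regularity :
    ∃ α : ℝ, 0 < α ∧ α < 1 / 2 ∧
      ∀ K : ℝ, 0 < K → ∀ s : ℝ, (1 - α) / 2 < s → s ≤ 1 / 2 →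
        ∃ Tstar C c : ℝ, 0 < Tstar ∧ 0 < C ∧ 0 < c ∧
          ∀ ε₁ : ℝ, 0 < ε₁ → ε₁ ≤ 1 →
            ∀ θ : ℝ → ℝ → ℝ,
              IsClassicalSolution s ε₁ θ {p : ℝ × ℝ | 0 < p.2} →
              (∀ t : ℝ, 0 < t →
                eLpNorm (fun x => θ x t) 2 volume ≤ ENNReal.ofReal K) →
              (∀ t : ℝ, 0 < t →
                Tendsto (fun x => θ x t) (cocompact ℝ) (nhds 0)) →
              ∀ t : ℝ, Tstar < t → ∀ x y : ℝ,
                c * ε₁ ^ (2 - 2 * s) < |x - y| →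
                |θ x t - θ y t| ≤ C * |x - y| ^ α := by
  refine ⟨1 / 4, by norm_num, by norm_num, fun K hK s hs38 hs => ?_⟩
  have hs38' : 3 / 8 < s := by linarith
  have hs0 : 0 < s := by linarith
  rcases hs.lt_or_eq with hs | rfl
  · have hc := fracC_pos hs0 (by linarith : s < 1)
    have hL := holderScale_pos hs0 (by linarith : s < 1)
    set m := 4 * s * (fracC s * K ^ (-(4 * s)) / 2) with hm
    have hm0 : 0 < m := by positivity
    set τ := holderScale s ^ (2 * s) / (2 * s * fracC s) with hτ
    have hτ0 : 0 < τ := by positivity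
    refine ⟨1 / m + τ, holderConst s, 1, by positivity, by rw [holderConst]; positivity, one_pos,
      fun ε hε0 hε θ hθ hL2 _ t ht x y _ => ?_⟩
    have hm1 : 0 < 1 / m := by positivity
    have hone : ∀ x q, t - τ ≤ q → |θ x q| ≤ 1 := fun x q hq =>
      abs_le_one_of_eLpNorm_le hs0 hs hε0 hε hK hθ hL2 x (by linarith) <| by
        rw [← hm, ← div_le_iff₀' hm0]
        linarith
    have hscale : holderScale s ^ (2 * s) = 2 * s * fracC s * (t - (t - τ)) := by
      rw [sub_sub_cancel, hτ]
      field_simp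
    have key := holder_of_abs_le_one hs38' hs hε0 hε hθ (by linarith) hscale hone
    refine abs_sub_le_iff.2 ⟨key x y, ?_⟩
    rw [abs_sub_comm x y]
    exact key y x
  · refine ⟨1, 1, 1, one_pos, one_pos, one_pos, fun ε _ _ θ hθ _ _ t ht x y _ => ?_⟩
    have ht0 : 0 < t := by linarith
    have hconst : θ x t = θ y t :=
      is_const_of_deriv_eq_zero (f := fun z => θ z t) (fun z => hθ.diff_x (z, t) ht0)
        (fun z => deriv_eq_zero_of_integrable (hθ.diff_x (z, t) ht0) <| by
          have := hθ.integrable (z, t) ht0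
          norm_num at this ⊢
          exact this) x y
    rw [hconst, sub_self, abs_zero]
    positivity
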